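/- Let S be an idempotent covered semigroup. Then S is simple (S has exactly one 𝓙-class, i.e., S¹aS¹ = S¹bS¹ for all a, b ∈ S) if and only if T(S) is simple, and S is bisimple (S has exactly one 𝓓-class) if and only if T(S) is bisimple. -/

import Mathlib

namespace SemibandEmbed

/-- The two-element right-zero semigroup `R₂ = {σ, τ}`. -/
inductive R2 : Type where
  | σ : R2
  | τ : R2
  deriving DecidableEq

section GreenDefs

variable {S : Type*} [Semigroup S]

/-- Green's relation 𝓡 : `a 𝓡 b` iff `a S¹ = b S¹` (inside `S¹ = WithOne S`). -/
def greenR (a b : S) : Prop :=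
  {x : WithOne S | ∃ u : WithOne S, x = (a : WithOne S) * u} =
    {x : WithOne S | ∃ u : WithOne S, x = (b : WithOne S) * u}

/-- Green's relation 𝓛 : `a 𝓛 b` iff `S¹ a = S¹ b`. -/
def greenL (a b : S) : Prop :=
  {x : WithOne S | ∃ u : WithOne S, x = u * (a : WithOne S)} =
    {x : WithOne S | ∃ u : WithOne S, x = u * (b : WithOne S)}

/-- Green's relation 𝓗 = 𝓛 ∩ 𝓡. -/
def greenH (a b : S) : Prop := greenL a b ∧ greenR a b

/-- Green's relation 𝓓 : `a 𝓓 b` iff `a 𝓡 c` and `c 𝓛 b` for some `c`. -/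
def greenD (a b : S) : Prop := ∃ c : S, greenR a c ∧ greenL c b

/-- Green's relation 𝓙 : `a 𝓙 b` iff `S¹ a S¹ = S¹ b S¹`. -/
def greenJ (a b : S) : Prop :=
  {x : WithOne S | ∃ u v : WithOne S, x = u * (a : WithOne S) * v} =
    {x : WithOne S | ∃ u v : WithOne S, x = u * (b : WithOne S) * v}

/-- Mitsch's natural partial order on a semigroup. -/
def natLe (a b : S) : Prop := ∃ x y : S, a = x * b ∧ a = b * y ∧ a = a * y

end GreenDefs

/-- A semigroup is idempotent covered if every element `s` satisfies `s e = s = f s`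
for some idempotents `e`, `f`. -/
def IdemCovered (S : Type*) [Semigroup S] : Prop :=
  ∀ s : S, ∃ e f : S, IsIdempotentElem e ∧ IsIdempotentElem f ∧ s * e = s ∧ f * s = s

/-- A semigroup is regular if every `a` satisfies `a x a = a` for some `x`. -/
def IsRegularSemigroup (S : Type*) [Semigroup S] : Prop :=
  ∀ a : S, ∃ x : S, a * x * a = a

/-- A semigroup is periodic if every element generates a finite monogenic subsemigroup,
i.e. `aᵐ = aⁿ` for some `0 < m < n` (powers computed in `S¹ = WithOne S`). -/
def IsPeriodic (S : Type*) [Semigroup S] : Prop :=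
  ∀ a : S, ∃ m n : ℕ, 0 < m ∧ m < n ∧ (a : WithOne S) ^ m = (a : WithOne S) ^ n

/-- `𝓗` is a left congruence. -/
def IsLeftCongH (S : Type*) [Semigroup S] : Prop :=
  ∀ a b c : S, greenH a b → greenH (c * a) (c * b)

/-- `𝓗` is a right congruence. -/
def IsRightCongH (S : Type*) [Semigroup S] : Prop :=
  ∀ a b c : S, greenH a b → greenH (a * c) (b * c)

/-- A semigroup is completely regular if every element is 𝓗-related to an idempotent. -/
def IsCompletelyRegular (S : Type*) [Semigroup S] : Prop :=
  ∀ a : S, ∃ e : S, IsIdempotentElem e ∧ greenH a e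

section SemidirectProduct

variable {S : Type*} [Semigroup S]

/-- The multiplication of the semidirect product `(S × S) * R₂`:
`(t₁,s₁,σ)·(t₂,s₂,α) = (t₁s₂, s₁s₂, α)` and `(t₁,s₁,τ)·(t₂,s₂,α) = (t₁t₂, s₁t₂, α)`. -/
def sdMul (x y : S × S × R2) : S × S × R2 :=
  match x, y with
  | (t₁, s₁, R2.σ), (_, s₂, α) => (t₁ * s₂, s₁ * s₂, α)
  | (t₁, s₁, R2.τ), (t₂, _, α) => (t₁ * t₂, s₁ * t₂, α)

instance : Mul (S × S × R2) := ⟨sdMul⟩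

theorem sdMul_def (x y : S × S × R2) : x * y = sdMul x y := rfl

instance : Semigroup (S × S × R2) where
  mul_assoc x y z := by
    obtain ⟨t₁, s₁, α₁⟩ := x
    obtain ⟨t₂, s₂, α₂⟩ := y
    obtain ⟨t₃, s₃, α₃⟩ := z
    cases α₁ <;> cases α₂ <;> simp [sdMul_def, sdMul, mul_assoc]

/-- The set `E = {(s,t,α) ∈ E(T*R₂) : s ∈ S¹ t}`. -/
def Eset (S : Type*) [Semigroup S] : Set (S × S × R2) :=
  {x | IsIdempotentElem x ∧ ∃ a : WithOne S, (x.1 : WithOne S) = a * (x.2.1 : WithOne S)}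

/-- `T(S)`: the subsemigroup of the semidirect product generated by `E`. -/
def TS (S : Type*) [Semigroup S] : Subsemigroup (S × S × R2) :=
  Subsemigroup.closure (Eset S)

/-- Green's `𝓛` is a right congruence. -/
theorem greenL_mul_right {S : Type*} [Semigroup S] {a b : S} (hab : greenL a b) (c : S) :
    greenL (a * c) (b * c) := by
  have key : ∀ {a b : S}, greenL a b → ∀ x : WithOne S,
      (∃ u : WithOne S, x = u * ((a * c : S) : WithOne S)) →
      (∃ u : WithOne S, x = u * ((b * c : S) : WithOne S)) := by
    intro a b hab x hx
    obtain ⟨u, rfl⟩ := hx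
    have h1 : (u * (a : WithOne S)) ∈
        {x : WithOne S | ∃ u : WithOne S, x = u * (a : WithOne S)} := ⟨u, rfl⟩
    rw [greenL] at hab
    rw [hab] at h1
    obtain ⟨w, hw⟩ := h1
    refine ⟨w, ?_⟩
    rw [WithOne.coe_mul, WithOne.coe_mul, ← mul_assoc, hw, mul_assoc]
  have hab' : greenL b a := hab.symm
  ext x
  exact ⟨key hab x, key hab' x⟩

/-- `R(S) = {(s,t,α) ∈ T(S) : s 𝓛 t}`, a subsemigroup of `T(S)`. -/
def RS (S : Type*) [Semigroup S] : Subsemigroup ↥(TS S) where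
  carrier := {x | greenL (x : S × S × R2).1 (x : S × S × R2).2.1}
  mul_mem' := by
    rintro ⟨⟨s, t, α⟩, hx⟩ ⟨⟨u, v, β⟩, hy⟩ hxs hys
    simp only [Set.mem_setOf_eq] at hxs hys ⊢
    cases α <;> exact greenL_mul_right hxs _

end SemidirectProduct


section Helpers

variable {S : Type*} [Semigroup S]

theorem one_or {P : WithOne S → Prop} : (∃ u, P u) ↔ P 1 ∨ ∃ u : S, P u := by
  constructor
  · rintro ⟨u, hu⟩
    cases u using WithOne.recOneCoe with
    | one => exact Or.inl hu
    | coe a => exact Or.inr ⟨a, hu⟩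
  · rintro (h | ⟨u, h⟩)
    · exact ⟨1, h⟩
    · exact ⟨u, h⟩

theorem greenR_iff (a b : S) :
    greenR a b ↔ (b = a ∨ ∃ u, b = a * u) ∧ (a = b ∨ ∃ u, a = b * u) := by
  have h1 : ∀ a b : S, (b = a ∨ ∃ u, b = a * u) ↔ ∃ u : WithOne S, (b : WithOne S) = a * u := by
    intro a b
    rw [one_or]
    simp only [mul_one, WithOne.coe_inj, ← WithOne.coe_mul]
  rw [h1, h1]
  constructor
  · intro h
    constructor
    · exact h.symm.subset ⟨1, by simp⟩
    · exact h.subset ⟨1, by simp⟩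
  · rintro ⟨⟨u, hu⟩, ⟨v, hv⟩⟩
    ext x
    constructor
    · rintro ⟨w, rfl⟩
      exact ⟨v * w, by rw [← mul_assoc, ← hv]⟩
    · rintro ⟨w, rfl⟩
      exact ⟨u * w, by rw [← mul_assoc, ← hu]⟩

theorem greenL_iff (a b : S) :
    greenL a b ↔ (b = a ∨ ∃ u, b = u * a) ∧ (a = b ∨ ∃ u, a = u * b) := by
  have h1 : ∀ a b : S, (b = a ∨ ∃ u, b = u * a) ↔ ∃ u : WithOne S, (b : WithOne S) = u * a := by
    intro a b
    rw [one_or]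
    simp only [one_mul, WithOne.coe_inj, ← WithOne.coe_mul]
  rw [h1, h1]
  constructor
  · intro h
    constructor
    · exact h.symm.subset ⟨1, by simp⟩
    · exact h.subset ⟨1, by simp⟩
  · rintro ⟨⟨u, hu⟩, ⟨v, hv⟩⟩
    ext x
    constructor
    · rintro ⟨w, rfl⟩
      exact ⟨w * v, by rw [mul_assoc, ← hv]⟩
    · rintro ⟨w, rfl⟩
      exact ⟨w * u, by rw [mul_assoc, ← hu]⟩

/-- `b ∈ S¹ a S¹`. -/
def jle (a b : S) : Prop :=
  b = a ∨ (∃ u, b = u * a) ∨ (∃ v, b = a * v) ∨ ∃ u v, b = u * a * v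

theorem greenJ_iff (a b : S) : greenJ a b ↔ jle a b ∧ jle b a := by
  have h1 : ∀ a b : S, jle a b ↔ ∃ u v : WithOne S, (b : WithOne S) = u * a * v := by
    intro a b
    simp only [one_or, one_mul, mul_one, WithOne.coe_inj, ← WithOne.coe_mul, jle]
    constructor
    · rintro (h | ⟨u, h⟩ | h | ⟨u, v, h⟩)
      · exact Or.inl (Or.inl h)
      · exact Or.inr ⟨u, Or.inl h⟩
      · exact Or.inl (Or.inr h)
      · exact Or.inr ⟨u, Or.inr ⟨v, h⟩⟩
    · rintro ((h | h) | ⟨u, h | ⟨v, h⟩⟩)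
      · exact Or.inl h
      · exact Or.inr (Or.inr (Or.inl h))
      · exact Or.inr (Or.inl ⟨u, h⟩)
      · exact Or.inr (Or.inr (Or.inr ⟨u, v, h⟩))
  rw [h1, h1]
  constructor
  · intro h
    constructor
    · exact h.symm.subset ⟨1, 1, by simp⟩
    · exact h.subset ⟨1, 1, by simp⟩
  · rintro ⟨⟨u, u', hu⟩, ⟨v, v', hv⟩⟩
    ext x
    constructor
    · rintro ⟨w, w', rfl⟩
      exact ⟨w * v, v' * w', by rw [hv]; simp only [mul_assoc]⟩
    · rintro ⟨w, w', rfl⟩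
      exact ⟨w * u, u' * w', by rw [hu]; simp only [mul_assoc]⟩

theorem cov_right (hS : IdemCovered S) (a b : S) :
    (b = a ∨ ∃ u, b = a * u) ↔ ∃ u, b = a * u := by
  refine ⟨?_, Or.inr⟩
  rintro (rfl | h)
  · obtain ⟨e, f, -, -, he, hf⟩ := hS b
    exact ⟨e, he.symm⟩
  · exact h

theorem cov_left (hS : IdemCovered S) (a b : S) :
    (b = a ∨ ∃ u, b = u * a) ↔ ∃ u, b = u * a := by
  refine ⟨?_, Or.inr⟩
  rintro (rfl | h)
  · obtain ⟨e, f, -, -, he, hf⟩ := hS b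
    exact ⟨f, hf.symm⟩
  · exact h

theorem cov_jle (hS : IdemCovered S) (a b : S) : jle a b ↔ ∃ u v, b = u * a * v := by
  refine ⟨?_, fun h => Or.inr (Or.inr (Or.inr h))⟩
  obtain ⟨e, f, -, -, he, hf⟩ := hS a
  rintro (rfl | ⟨u, rfl⟩ | ⟨v, rfl⟩ | h)
  · exact ⟨f, e, by rw [hf, he]⟩
  · exact ⟨u, e, by rw [mul_assoc, he]⟩
  · exact ⟨f, v, by rw [hf]⟩
  · exact h

@[simp] theorem mul_sig (t₁ s₁ t₂ s₂ : S) (α : R2) :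
    ((t₁, s₁, R2.σ) : S × S × R2) * (t₂, s₂, α) = (t₁ * s₂, s₁ * s₂, α) := rfl

@[simp] theorem mul_tau (t₁ s₁ t₂ s₂ : S) (α : R2) :
    ((t₁, s₁, R2.τ) : S × S × R2) * (t₂, s₂, α) = (t₁ * t₂, s₁ * t₂, α) := rfl

theorem mem_gen_sig {x e : S} (he : e * e = e) (hx : x * e = x) :
    ((x, e, R2.σ) : S × S × R2) ∈ TS S := by
  refine Subsemigroup.subset_closure ⟨?_, (x : WithOne S), ?_⟩
  · simp [IsIdempotentElem, he, hx]
  · simp [← WithOne.coe_mul, hx]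

theorem mem_gen_idem {e : S} (he : e * e = e) (α : R2) :
    ((e, e, α) : S × S × R2) ∈ TS S := by
  refine Subsemigroup.subset_closure ⟨?_, (e : WithOne S), ?_⟩
  · cases α <;> simp [IsIdempotentElem, he]
  · simp [← WithOne.coe_mul, he]

theorem mem_TS (hS : IdemCovered S) (a t : S) (α : R2) :
    ((a * t, t, α) : S × S × R2) ∈ TS S := by
  obtain ⟨e, f, he, hf, hte, hft⟩ := hS t
  have h1 : ((a * f, f, R2.σ) : S × S × R2) ∈ TS S :=
    mem_gen_sig hf (by rw [mul_assoc, hf])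
  have h2 : ((t, e, R2.σ) : S × S × R2) ∈ TS S := mem_gen_sig he hte
  have h := mul_mem (mul_mem (mul_mem h1 (mem_gen_idem hf R2.τ))
    (mul_mem h2 (mem_gen_idem he R2.τ))) (mem_gen_idem he α)
  have hff : f * f = f := hf
  simpa [mul_assoc, hte, hft, hff] using h

theorem of_mem_TS (hS : IdemCovered S) {x : S × S × R2} (hx : x ∈ TS S) :
    ∃ a, x.1 = a * x.2.1 := by
  induction hx using Subsemigroup.closure_induction with
  | mem x hx =>
    have := hx.2
    rw [one_or] at this
    simp only [one_mul, WithOne.coe_inj, ← WithOne.coe_mul] at this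
    exact (cov_left hS _ _).1 this
  | mul x y _ _ hx hy =>
    obtain ⟨a, ha⟩ := hx
    obtain ⟨t₁, s₁, α⟩ := x
    obtain ⟨t₂, s₂, β⟩ := y
    simp only at ha
    exact ⟨a, by cases α <;> simp [ha, mul_assoc]⟩

theorem diag_mem (hS : IdemCovered S) (v : S) (α : R2) : ((v, v, α) : S × S × R2) ∈ TS S := by
  obtain ⟨e, f, -, -, -, hf⟩ := hS v
  have := mem_TS hS f v α
  rwa [hf] at this

theorem right_act (hS : IdemCovered S) (x y : TS S) (a v : S)
    (hx : x.1.1 = a * x.1.2.1) (hy : y.1.1 = a * y.1.2.1) (h : y.1.2.1 = x.1.2.1 * v) :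
    ∃ z, y = x * z := by
  obtain ⟨⟨s, t, α⟩, hx'⟩ := x
  obtain ⟨⟨s', t', β⟩, hy'⟩ := y
  simp only at hx hy h
  refine ⟨⟨(v, v, β), diag_mem hS v β⟩, Subtype.ext ?_⟩
  cases α <;> simp [hx, hy, h, mul_assoc]

theorem left_act (hS : IdemCovered S) (x y : TS S) (v : S)
    (h : y.1.2.1 = v * x.1.2.1) (hα : y.1.2.2 = x.1.2.2) :
    ∃ z, y = z * x := by
  obtain ⟨a, ha⟩ := of_mem_TS hS y.2
  obtain ⟨⟨s, t, α⟩, hx'⟩ := x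
  obtain ⟨⟨s', t', β⟩, hy'⟩ := y
  simp only at h hα ha
  refine ⟨⟨(a * v, v, R2.σ), mem_TS hS a v _⟩, Subtype.ext ?_⟩
  simp [ha, h, hα, mul_assoc]

theorem jT (hS : IdemCovered S) (x y : TS S) (u v : S)
    (h : y.1.2.1 = u * x.1.2.1 * v) : jle x y := by
  obtain ⟨a, ha⟩ := of_mem_TS hS x.2
  obtain ⟨r, hr⟩ := right_act hS x
    ⟨(a * (x.1.2.1 * v), x.1.2.1 * v, y.1.2.2), mem_TS hS _ _ _⟩ a v ha rfl rfl
  obtain ⟨l, hl⟩ := left_act hS (y := y) (v := u)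
    (x := ⟨(a * (x.1.2.1 * v), x.1.2.1 * v, y.1.2.2), mem_TS hS _ _ _⟩)
    (by rw [h, mul_assoc]) rfl
  exact Or.inr (Or.inr (Or.inr ⟨l, r, by rw [hl, hr, mul_assoc]⟩))

/-- both components lie in `S a S`. -/
def inJ (a : S) (z : S × S × R2) : Prop :=
  (∃ u v, z.1 = u * a * v) ∧ (∃ u v, z.2.1 = u * a * v)

theorem inJ_left (a : S) (w z : S × S × R2) (h : inJ a z) : inJ a (w * z) := by
  obtain ⟨t₁, s₁, α⟩ := w
  obtain ⟨t₂, s₂, β⟩ := z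
  obtain ⟨⟨u, v, h1⟩, ⟨u', v', h2⟩⟩ := h
  simp only at h1 h2
  cases α
  · exact ⟨⟨t₁ * u', v', by simp [h2, mul_assoc]⟩, ⟨s₁ * u', v', by simp [h2, mul_assoc]⟩⟩
  · exact ⟨⟨t₁ * u, v, by simp [h1, mul_assoc]⟩, ⟨s₁ * u, v, by simp [h1, mul_assoc]⟩⟩

theorem inJ_right (a : S) (w z : S × S × R2) (h : inJ a z) : inJ a (z * w) := by
  obtain ⟨t₁, s₁, α⟩ := w
  obtain ⟨t₂, s₂, β⟩ := z
  obtain ⟨⟨u, v, h1⟩, ⟨u', v', h2⟩⟩ := h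
  simp only at h1 h2
  cases β
  · exact ⟨⟨u, v * s₁, by simp [h1, mul_assoc]⟩, ⟨u', v' * s₁, by simp [h2, mul_assoc]⟩⟩
  · exact ⟨⟨u, v * t₁, by simp [h1, mul_assoc]⟩, ⟨u', v' * t₁, by simp [h2, mul_assoc]⟩⟩

theorem inJ_jle {a : S} {x y : TS S} (h : inJ a x.1) (hxy : jle x y) : inJ a y.1 := by
  rcases hxy with rfl | ⟨u, rfl⟩ | ⟨v, rfl⟩ | ⟨u, v, rfl⟩
  · exact h
  · exact inJ_left _ _ _ h
  · exact inJ_right _ _ _ h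
  · exact inJ_right _ _ _ (inJ_left _ _ _ h)

theorem J_down (hS : IdemCovered S) (h : ∀ x y : TS S, greenJ x y) (a b : S) : jle a b := by
  have h1 := ((greenJ_iff _ _).1
    (h ⟨(a, a, R2.σ), diag_mem hS a _⟩ ⟨(b, b, R2.σ), diag_mem hS b _⟩)).1
  have h0 := (cov_jle hS a a).1 (Or.inl rfl)
  exact (cov_jle hS a b).2 (inJ_jle (a := a) ⟨h0, h0⟩ h1).1

theorem D_up (hS : IdemCovered S) (x y : TS S) (h : greenD x.1.2.1 y.1.2.1) : greenD x y := by
  obtain ⟨c, hR, hL⟩ := h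
  rw [greenR_iff, cov_right hS, cov_right hS] at hR
  rw [greenL_iff, cov_left hS, cov_left hS] at hL
  obtain ⟨⟨u, hu⟩, ⟨v, hv⟩⟩ := hR
  obtain ⟨⟨p, hp⟩, ⟨q, hq⟩⟩ := hL
  obtain ⟨a, ha⟩ := of_mem_TS hS x.2
  refine ⟨⟨(a * c, c, y.1.2.2), mem_TS hS _ _ _⟩, ?_, ?_⟩
  · rw [greenR_iff]
    exact ⟨Or.inr (right_act hS _ _ a u ha rfl hu), Or.inr (right_act hS _ _ a v rfl ha hv)⟩
  · rw [greenL_iff]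
    exact ⟨Or.inr (left_act hS _ _ p hp rfl), Or.inr (left_act hS _ _ q hq rfl)⟩

theorem D_down (hS : IdemCovered S) (a b : S)
    (h : greenD (⟨(a, a, R2.σ), diag_mem hS a _⟩ : TS S) ⟨(b, b, R2.σ), diag_mem hS b _⟩) :
    greenD a b := by
  obtain ⟨⟨⟨p, q, α⟩, hc⟩, hR, hL⟩ := h
  rw [greenR_iff] at hR
  rw [greenL_iff] at hL
  simp only [Subtype.ext_iff, Subtype.exists, Prod.exists, MulMemClass.coe_mul] at hR hL
  obtain ⟨hR1, hR2⟩ := hR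
  obtain ⟨hL1, hL2⟩ := hL
  have hpq : p = q ∧ (q = a ∨ ∃ u, q = a * u) := by
    rcases hR1 with h | ⟨u, v, β, -, h⟩
    · simp only [Prod.mk.injEq] at h
      exact ⟨h.1.trans h.2.1.symm, Or.inl h.2.1⟩
    · simp only [mul_sig, Prod.mk.injEq] at h
      exact ⟨h.1.trans h.2.1.symm, Or.inr ⟨v, h.2.1⟩⟩
  obtain ⟨rfl, h1⟩ := hpq
  refine ⟨p, (greenR_iff _ _).2 ⟨h1, ?_⟩, (greenL_iff _ _).2 ⟨?_, ?_⟩⟩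
  · rcases hR2 with h | ⟨u, v, β, -, h⟩
    · simp only [Prod.mk.injEq] at h
      exact Or.inl h.1
    · cases α <;> simp only [mul_sig, mul_tau, Prod.mk.injEq] at h <;> exact Or.inr ⟨_, h.1⟩
  · rcases hL1 with h | ⟨u, v, β, -, h⟩
    · simp only [Prod.mk.injEq] at h
      exact Or.inl h.1
    · cases β <;> simp only [mul_sig, mul_tau, Prod.mk.injEq] at h <;> exact Or.inr ⟨_, h.1⟩
  · rcases hL2 with h | ⟨u, v, β, -, h⟩
    · simp only [Prod.mk.injEq] at h
      exact Or.inl h.1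
    · cases β <;> simp only [mul_sig, mul_tau, Prod.mk.injEq] at h <;> exact Or.inr ⟨_, h.1⟩

end Helpers

/-- `S` is simple iff `T(S)` is simple, and bisimple iff `T(S)` is bisimple. -/
theorem statement_15 {S : Type*} [Semigroup S] (hS : IdemCovered S) :
    ((∀ a b : S, greenJ a b) ↔ ∀ x y : ↥(TS S), greenJ x y) ∧
    ((∀ a b : S, greenD a b) ↔ ∀ x y : ↥(TS S), greenD x y) := by
  refine ⟨⟨fun h x y => ?_, fun h a b => ?_⟩, ⟨fun h x y => ?_, fun h a b => ?_⟩⟩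
  · obtain ⟨h1, h2⟩ := (greenJ_iff _ _).1 (h x.1.2.1 y.1.2.1)
    obtain ⟨u, v, h1⟩ := (cov_jle hS _ _).1 h1
    obtain ⟨u', v', h2⟩ := (cov_jle hS _ _).1 h2
    exact (greenJ_iff _ _).2 ⟨jT hS _ _ u v h1, jT hS _ _ u' v' h2⟩
  · exact (greenJ_iff _ _).2 ⟨J_down hS h a b, J_down hS h b a⟩
  · exact D_up hS x y (h _ _)
  · exact D_down hS a b (h _ _)

end SemibandEmbed
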